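/- Let E ⊂ ℝ^{N×n} be a bounded set and for δ > 0 let E_δ be compact sets such that Rco_f E_δ ⊂ int Rco_f E and: (i) for every ε > 0 there exists δ_0 > 0 such that dist(η; E) ≤ ε for all η ∈ E_δ and all δ ∈ (0, δ_0]; (ii) if η ∈ int Rco_f E then there exists δ_0 > 0 such that η ∈ Rco_f E_δ for all δ ∈ (0, δ_0]. Then: for every δ > 0 and every ξ ∈ Rco_f E_δ there exist I ∈ ℕ and pairs (λ_i, ξ_i), i = 1,…,I, with λ_i > 0, Σ_{i=1}^I λ_i = 1, ξ_i ∈ ℝ^{N×n}, satisfying (H_I(int Rco_f E)), such that ξ = Σ_{i=1}^I λ_i ξ_i and Σ_{i : ξ_i ∉ B_δ(E)} λ_i < δ. -/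

import Mathlib

open MeasureTheory Filter

attribute [local instance] Classical.propDecidable
attribute [local instance] Matrix.frobeniusNormedAddCommGroup Matrix.frobeniusNormedSpace

noncomputable section

/-- The space of real `N × n` matrices. -/
abbrev Mat (N n : ℕ) : Type := Matrix (Fin N) (Fin n) ℝ

/-- A function `f : ℝ^{N×n} → ℝ` is rank one convex. -/
def RankOneConvexFun {N n : ℕ} (f : Mat N n → ℝ) : Prop :=
  ∀ lam ∈ Set.Icc (0:ℝ) 1, ∀ ξ η : Mat N n, (ξ - η).rank = 1 →
    f (lam • ξ + (1 - lam) • η) ≤ lam * f ξ + (1 - lam) * f η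

/-- The hull `Rco_f E`. -/
def RcoF {N n : ℕ} (E : Set (Mat N n)) : Set (Mat N n) :=
  {ξ | ∀ f : Mat N n → ℝ, RankOneConvexFun f → (∀ η ∈ E, f η ≤ 0) → f ξ ≤ 0}

/-- A set of matrices is rank one convex. -/
def RankOneConvexSet {N n : ℕ} (S : Set (Mat N n)) : Prop :=
  ∀ A ∈ S, ∀ B ∈ S, (A - B).rank = 1 → ∀ t ∈ Set.Icc (0:ℝ) 1, t • A + (1 - t) • B ∈ S

/-- The property `(H_I(U))`, phrased on lists of (weight, matrix) pairs. -/
inductive HIProp {N n : ℕ} (U : Set (Mat N n)) : List (ℝ × Mat N n) → Prop where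
  | single (l : ℝ) (ξ : Mat N n) (hξ : ξ ∈ U) : HIProp U [(l, ξ)]
  | pair (l₁ l₂ : ℝ) (ξ₁ ξ₂ : Mat N n) (h₁ : ξ₁ ∈ U) (h₂ : ξ₂ ∈ U)
      (hrank : (ξ₁ - ξ₂).rank = 1) : HIProp U [(l₁, ξ₁), (l₂, ξ₂)]
  | step (L rest : List (ℝ × Mat N n)) (l₁ l₂ : ℝ) (ξ₁ ξ₂ : Mat N n)
      (hperm : L.Perm ((l₁, ξ₁) :: (l₂, ξ₂) :: rest)) (hrest : rest ≠ [])
      (h₁ : ξ₁ ∈ U) (h₂ : ξ₂ ∈ U) (hrank : (ξ₁ - ξ₂).rank = 1)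
      (hrec : HIProp U ((l₁ + l₂, ((l₁ + l₂)⁻¹) • (l₁ • ξ₁ + l₂ • ξ₂)) :: rest)) :
      HIProp U L

/-- The family `(λ_i, ξ_i)_{1 ≤ i ≤ I}` satisfies `(H_I(U))`. -/
def SatisfiesH {N n : ℕ} (U : Set (Mat N n)) (I : ℕ) (l : Fin I → ℝ)
    (ξ : Fin I → Mat N n) : Prop :=
  HIProp U (List.ofFn fun i => (l i, ξ i))

/-- The gradient of a map `u : ℝ^n → ℝ^N`, as an `N × n` matrix. -/
def matGrad {N n : ℕ} (u : (Fin n → ℝ) → Fin N → ℝ) (x : Fin n → ℝ) : Mat N n :=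
  LinearMap.toMatrix' (fderiv ℝ u x).toLinearMap

/-- `u` is affine on the set `s`. -/
def AffineOn {N n : ℕ} (u : (Fin n → ℝ) → Fin N → ℝ) (s : Set (Fin n → ℝ)) : Prop :=
  ∃ (A : Mat N n) (b : Fin N → ℝ), ∀ x ∈ s, u x = A.mulVec x + b

/-- `u` is piecewise affine on the open set `Ω`. -/
def PiecewiseAffineOn {N n : ℕ} (u : (Fin n → ℝ) → Fin N → ℝ)
    (Ω : Set (Fin n → ℝ)) : Prop :=
  ContinuousOn u (closure Ω) ∧
  ∃ P : ℕ → Set (Fin n → ℝ),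
    (∀ k, IsOpen (P k)) ∧ (∀ k, P k ⊆ Ω) ∧
    (∀ k l, k ≠ l → Disjoint (P k) (P l)) ∧
    volume (Ω \ ⋃ k, P k) = 0 ∧ ∀ k, AffineOn u (P k)

/-- `u` is piecewise `C¹` on the open set `Ω`. -/
def PiecewiseC1On {N n : ℕ} (u : (Fin n → ℝ) → Fin N → ℝ)
    (Ω : Set (Fin n → ℝ)) : Prop :=
  ContinuousOn u (closure Ω) ∧
  ∃ P : ℕ → Set (Fin n → ℝ),
    (∀ k, IsOpen (P k)) ∧ (∀ k, P k ⊆ Ω) ∧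
    (∀ k l, k ≠ l → Disjoint (P k) (P l)) ∧
    volume (Ω \ ⋃ k, P k) = 0 ∧ ∀ k, ContDiffOn ℝ 1 u (P k)

/-- `u ∈ φ + W₀^{1,∞}(Ω; ℝ^N)`: `u` is Lipschitz on `closure Ω` and agrees with `φ`
on the boundary of `Ω`. -/
def MemW01inf {N n : ℕ} (Ω : Set (Fin n → ℝ)) (φ u : (Fin n → ℝ) → Fin N → ℝ) : Prop :=
  (∃ C : NNReal, LipschitzOnWith C u (closure Ω)) ∧ ∀ x ∈ frontier Ω, u x = φ x

/-- `K` has the relaxation property with respect to `E`. -/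
def HasRelaxationProperty {N n : ℕ} (K E : Set (Mat N n)) : Prop :=
  ∀ Ω : Set (Fin n → ℝ), IsOpen Ω → Bornology.IsBounded Ω →
    ∀ ξ ∈ K, ∀ b : Fin N → ℝ,
      ∃ u : ℕ → (Fin n → ℝ) → Fin N → ℝ,
        (∀ ν, PiecewiseAffineOn (u ν) Ω) ∧
        (∀ ν, MemW01inf Ω (fun x => ξ.mulVec x + b) (u ν)) ∧
        (∀ ν, ∀ᵐ x ∂(volume.restrict Ω), matGrad (u ν) x ∈ E ∪ K) ∧
        (∃ C : NNReal, ∀ ν, LipschitzOnWith C (u ν) (closure Ω)) ∧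
        TendstoUniformlyOn u (fun x => ξ.mulVec x + b) atTop (closure Ω) ∧
        Tendsto (fun ν => ∫ x in Ω, Metric.infDist (matGrad (u ν) x) E) atTop (nhds 0)

/-- The singular values of a square matrix, in nondecreasing order:
the square roots of the eigenvalues of `ξ ξᵀ`, sorted. -/
def singularValues {n : ℕ} (ξ : Matrix (Fin n) (Fin n) ℝ) (i : Fin n) : ℝ :=
  Real.sqrt ((Matrix.isHermitian_mul_conjTranspose_self ξ).eigenvalues
    (Tuple.sort (Matrix.isHermitian_mul_conjTranspose_self ξ).eigenvalues i))

end

section Statements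

open Metric Set

/-!
For `K = E_η` and `U = int Rco_f E`, let `g A` be the least mass outside `B_δ(E)` of a finite
laminate in `U` with barycentre `A`; concatenating laminates shows that `g` is convex along rank one
segments in `U`. Since `K` is bounded and `Rco_f K ⊆ U`, a compactness argument, relying on the
continuity of rank one convex functions, gives a rank one convex `φ` with `φ ≤ 0` on `K` and `φ > 1`
off `U`. As `g ≤ 1`, the function `max g φ` is rank one convex on the whole space, and it is
nonpositive on `K` once `K ⊆ B_δ(E)`. Hence `g ξ ≤ 0` for every `ξ ∈ Rco_f K`.
-/

section Convexity

/-- `f` is convex in each coordinate separately. Rank one convex functions are so in the matrix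
entries, and separate convexity already implies continuity. -/
def SeparatelyConvex {ι : Type*} (f : (ι → ℝ) → ℝ) : Prop :=
  ∀ (x : ι → ℝ) (i : ι), ConvexOn ℝ univ fun t : ℝ => f (Function.update x i t)

theorem sub_le_one_add_abs_mul_sub {g : ℝ → ℝ} (hg : ConvexOn ℝ univ g) {x M : ℝ}
    (hl : g (x - 1) ≤ M) (hr : g (x + 1) ≤ M) (y : ℝ) :
    M - g y ≤ (1 + |y - x|) * (M - g x) := by
  rcases lt_trichotomy y x with hyx | rfl | hxy
  · have hslope := hg.slope_mono_adjacent (mem_univ y) (mem_univ (x + 1)) hyx (lt_add_one x)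
    rw [add_sub_cancel_left, div_one, div_le_iff₀ (sub_pos.2 hyx)] at hslope
    rw [abs_of_neg (sub_neg.2 hyx)]
    nlinarith
  · simp
  · have hslope := hg.slope_mono_adjacent (mem_univ (x - 1)) (mem_univ y) (sub_one_lt x) hxy
    rw [sub_sub_cancel, div_one, le_div_iff₀ (sub_pos.2 hxy)] at hslope
    rw [abs_of_pos (sub_pos.2 hxy)]
    nlinarith

namespace SeparatelyConvex

variable {ι : Type*} {f : (ι → ℝ) → ℝ}

theorem exists_vertex_le (hf : SeparatelyConvex f) {a b y : ι → ℝ} (hy : y ∈ Icc a b)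
    (S : Finset ι) :
    ∃ z, (∀ i ∈ S, z i = a i ∨ z i = b i) ∧ (∀ i ∉ S, z i = y i) ∧ f y ≤ f z := by
  induction S using Finset.induction_on with
  | empty => exact ⟨y, by simp, by simp, le_rfl⟩
  | insert j S hj ih =>
    obtain ⟨z, hzS, hzy, hle⟩ := ih
    have hmax : f z ≤ max (f (Function.update z j (a j))) (f (Function.update z j (b j))) := by
      have hyj : y j ∈ Icc (a j) (b j) := ⟨hy.1 j, hy.2 j⟩
      simpa [← hzy j hj] using (hf z j).le_max_of_mem_Icc (mem_univ _) (mem_univ _) hyj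
    have hupdate : ∀ c, c = a j ∨ c = b j → f z ≤ f (Function.update z j c) →
        ∃ w, (∀ i ∈ insert j S, w i = a i ∨ w i = b i) ∧ (∀ i ∉ insert j S, w i = y i) ∧
          f y ≤ f w := by
      intro c hc hzc
      refine ⟨Function.update z j c, fun i hi => ?_, fun i hi => ?_, hle.trans hzc⟩
      · rcases eq_or_ne i j with rfl | hij
        · simpa using hc
        · simpa [hij] using hzS i (Finset.mem_of_mem_insert_of_ne hi hij)
      · rw [Finset.mem_insert, not_or] at hi
        simpa [hi.1] using hzy i hi.2
    rcases le_max_iff.1 hmax with ha | hb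
    · exact hupdate (a j) (Or.inl rfl) ha
    · exact hupdate (b j) (Or.inr rfl) hb

theorem bddAbove_image_Icc [Finite ι] (hf : SeparatelyConvex f) (a b : ι → ℝ) :
    BddAbove (f '' Icc a b) := by
  cases nonempty_fintype ι
  have hfinite : (univ.pi fun i => ({a i, b i} : Set ℝ)).Finite :=
    Finite.pi fun i => (finite_singleton (b i)).insert (a i)
  obtain ⟨M, hM⟩ := (hfinite.image f).bddAbove
  refine ⟨M, forall_mem_image.2 fun y hy => ?_⟩
  obtain ⟨z, hz, -, hle⟩ := hf.exists_vertex_le hy Finset.univ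
  exact hle.trans (hM (mem_image_of_mem f fun i _ => hz i (Finset.mem_univ i)))

theorem sub_le_pow_mul_sub [Fintype ι] (hf : SeparatelyConvex f) {x y : ι → ℝ} {M : ℝ}
    (hM : ∀ z ∈ closedBall x 1, f z ≤ M) (hyx : dist y x ≤ 1) :
    M - f y ≤ (1 + dist y x) ^ Fintype.card ι * (M - f x) := by
  suffices h : ∀ S : Finset ι,
      M - f (S.piecewise y x) ≤ (1 + dist y x) ^ S.card * (M - f x) by
    simpa using h Finset.univ
  intro S
  induction S using Finset.induction_on with
  | empty => simp
  | insert j S hj ih =>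
    set z := S.piecewise y x with hz
    have hzj : z j = x j := by simp [hz, hj]
    have hcoord : ∀ i, dist (z i) (x i) ≤ 1 := fun i => by
      by_cases hi : i ∈ S
      · simpa [hz, hi] using (dist_le_pi_dist y x i).trans hyx
      · simp [hz, hi]
    have hle : ∀ t, dist t (x j) ≤ 1 → f (Function.update z j t) ≤ M := fun t ht => by
      refine hM _ (mem_closedBall.2 ((dist_pi_le_iff zero_le_one).2 fun i => ?_))
      rcases eq_or_ne i j with rfl | hij
      · simpa using ht
      · simpa [hij] using hcoord i
    have hstep : M - f (Function.update z j (y j)) ≤ (1 + |y j - x j|) * (M - f z) := by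
      have := sub_le_one_add_abs_mul_sub (hf z j) (x := x j) (hle _ (by simp))
        (hle _ (by simp)) (y j)
      rwa [← hzj, Function.update_eq_self, hzj] at this
    have hfz : 0 ≤ M - f z :=
      sub_nonneg.2 (hM z (mem_closedBall.2 ((dist_pi_le_iff zero_le_one).2 hcoord)))
    calc M - f ((insert j S).piecewise y x)
        = M - f (Function.update z j (y j)) := by rw [Finset.piecewise_insert]
      _ ≤ (1 + |y j - x j|) * (M - f z) := hstep
      _ ≤ (1 + dist y x) * ((1 + dist y x) ^ S.card * (M - f x)) := by
          gcongr
          exact dist_le_pi_dist y x j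
      _ = (1 + dist y x) ^ (insert j S).card * (M - f x) := by
          rw [Finset.card_insert_of_notMem hj]; ring

protected theorem continuous [Finite ι] (hf : SeparatelyConvex f) : Continuous f := by
  cases nonempty_fintype ι
  refine continuous_iff_continuousAt.2 fun x => ?_
  obtain ⟨M, hM⟩ : ∃ M, ∀ z ∈ closedBall x 2, f z ≤ M := by
    obtain ⟨M, hM⟩ := hf.bddAbove_image_Icc (fun i => x i - 2) (fun i => x i + 2)
    refine ⟨M, fun z hz => hM (mem_image_of_mem f ?_)⟩
    have hzx : ∀ i, z i ∈ Icc (x i - 2) (x i + 2) := fun i => by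
      rw [← Real.closedBall_eq_Icc]
      exact (dist_le_pi_dist z x i).trans hz
    exact ⟨fun i => (hzx i).1, fun i => (hzx i).2⟩
  let c : (ι → ℝ) → ℝ := fun y => (1 + dist y x) ^ Fintype.card ι
  have hc : Continuous c := by fun_prop
  have hc_pos : ∀ y, 0 < c y := fun y => by positivity
  have hcx : c x = 1 := by simp [c]
  have hlower : Tendsto (fun y => M - c y * (M - f x)) (nhds x) (nhds (f x)) := by
    have : Continuous fun y => M - c y * (M - f x) := by fun_prop
    simpa [hcx] using this.tendsto x
  have hupper : Tendsto (fun y => M - (M - f x) / c y) (nhds x) (nhds (f x)) := by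
    have : Continuous fun y => M - (M - f x) / c y :=
      continuous_const.sub (continuous_const.div hc fun y => (hc_pos y).ne')
    simpa [hcx] using this.tendsto x
  refine tendsto_of_tendsto_of_tendsto_of_le_of_le' hlower hupper ?_ ?_ <;>
    filter_upwards [closedBall_mem_nhds x one_pos] with y hy
  · have := hf.sub_le_pow_mul_sub
      (fun z hz => hM z (closedBall_subset_closedBall one_le_two hz)) hy
    linarith
  · have hball : closedBall y 1 ⊆ closedBall x 2 :=
      closedBall_subset_closedBall' (by linarith [mem_closedBall.1 hy])
    have := hf.sub_le_pow_mul_sub (fun z hz => hM z (hball hz)) (mem_closedBall'.1 hy)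
    rw [dist_comm, mul_comm, ← div_le_iff₀ (hc_pos y)] at this
    linarith

end SeparatelyConvex

theorem exists_mem_segment_le_of_le_of_convexOn {E : Type*} [AddCommGroup E] [Module ℝ E]
    {s : Set E} {φ g : E → ℝ} {c : ℝ} (hφ : ConvexOn ℝ s φ) (hgc : ∀ x ∈ s, g x ≤ c) {p x : E}
    (hp : p ∈ s) (hx : x ∈ s) (hpc : φ p < c) :
    ∃ r : ℝ, 0 < r ∧ r ≤ 1 ∧ p + r • (x - p) ∈ {y ∈ s | φ y ≤ c} ∧
      g (p + r • (x - p)) ≤ (1 - r) * φ p + r * max (g x) (φ x) := by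
  rcases le_or_gt (φ x) c with hxc | hxc
  · exact ⟨1, one_pos, le_rfl, by simpa using ⟨hx, hxc⟩, by simp⟩
  -- `r` is where the chord of `φ` from `p` to `x` reaches the level `c`.
  have hpos : 0 < φ x - φ p := by linarith
  set r := (c - φ p) / (φ x - φ p) with hr
  have hr0 : 0 < r := div_pos (by linarith) hpos
  have hr1 : r ≤ 1 := (div_le_one hpos).2 (by linarith)
  have hchord : (1 - r) * φ p + r * φ x = c := by rw [hr]; field_simp; ring
  have hpr : p + r • (x - p) = (1 - r) • p + r • x := by module
  have hmem : p + r • (x - p) ∈ s := hpr ▸ hφ.1 hp hx (by linarith) hr0.le (by ring)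
  refine ⟨r, hr0, hr1, ⟨hmem, ?_⟩, (hgc _ hmem).trans ?_⟩
  · have := hφ.2 hp hx (sub_nonneg.2 hr1) hr0.le (by ring)
    rwa [smul_eq_mul, smul_eq_mul, hchord, ← hpr] at this
  · rw [← hchord]
    gcongr
    exact le_max_right _ _

theorem exists_convexWeights_mul_eq {a b r q : ℝ} (ha : 0 < a) (hb : 0 < b) (hab : a + b = 1)
    (hr : 0 < r) (hr1 : r ≤ 1) (hq : 0 < q) (hq1 : q ≤ 1) :
    ∃ α β κ : ℝ, 0 < α ∧ 0 < β ∧ α + β = 1 ∧ κ ≤ 1 ∧ α * r = κ * a ∧ β * q = κ * b := by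
  have hpos : 0 < a * q + b * r := by positivity
  refine ⟨a * q / (a * q + b * r), b * r / (a * q + b * r), r * q / (a * q + b * r),
    by positivity, by positivity, by field_simp, (div_le_one hpos).2 ?_,
    by field_simp, by field_simp⟩
  calc r * q = a * q * r + b * r * q := by linear_combination (-(r * q)) * hab
    _ ≤ a * q + b * r :=
      add_le_add (mul_le_of_le_one_right (by positivity) hr1)
        (mul_le_of_le_one_right (by positivity) hq1)

theorem convexOn_sup_of_convexOn_sublevel {E : Type*} [AddCommGroup E] [Module ℝ E]
    {s : Set E} {φ g : E → ℝ} {c : ℝ} (hφ : ConvexOn ℝ s φ) (hgc : ∀ x ∈ s, g x ≤ c)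
    (hg : ConvexOn ℝ {x ∈ s | φ x ≤ c} g) : ConvexOn ℝ s (g ⊔ φ) := by
  refine convexOn_iff_forall_pos.2 ⟨hφ.1, fun x hx y hy a b ha hb hab => ?_⟩
  set p := a • x + b • y
  have hp : p ∈ s := hφ.1 hx hy ha.le hb.le hab
  have hφp : φ p ≤ a * (g ⊔ φ) x + b * (g ⊔ φ) y := by
    refine (hφ.2 hx hy ha.le hb.le hab).trans ?_
    rw [smul_eq_mul, smul_eq_mul]
    gcongr <;> exact le_sup_right
  refine sup_le ?_ hφp
  rcases le_or_gt c (φ p) with hcp | hpc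
  · exact (hgc p hp).trans (hcp.trans hφp)
  obtain ⟨r, hr0, hr1, hxr, hgx⟩ := exists_mem_segment_le_of_le_of_convexOn hφ hgc hp hx hpc
  obtain ⟨q, hq0, hq1, hyq, hgy⟩ := exists_mem_segment_le_of_le_of_convexOn hφ hgc hp hy hpc
  obtain ⟨α, β, κ, hα, hβ, hαβ, hκ1, hαr, hβq⟩ :=
    exists_convexWeights_mul_eq ha hb hab hr0 hr1 hq0 hq1
  have hbary : α • (p + r • (x - p)) + β • (p + q • (y - p)) = p := by
    have hcancel : a • (x - p) + b • (y - p) = 0 := by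
      rw [smul_sub, smul_sub, sub_add_sub_comm, ← add_smul, hab, one_smul, sub_self]
    calc _ = (α + β) • p + ((α * r) • (x - p) + (β * q) • (y - p)) := by module
      _ = p + κ • (a • (x - p) + b • (y - p)) := by rw [hαβ, hαr, hβq]; module
      _ = p := by rw [hcancel, smul_zero, add_zero]
  calc g p ≤ α * g (p + r • (x - p)) + β * g (p + q • (y - p)) := by
        simpa only [hbary, smul_eq_mul] using hg.2 hxr hyq hα.le hβ.le hαβ
    _ ≤ α * ((1 - r) * φ p + r * (g ⊔ φ) x) + β * ((1 - q) * φ p + q * (g ⊔ φ) y) := by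
        gcongr <;> assumption
    _ = (1 - κ) * φ p + κ * (a * (g ⊔ φ) x + b * (g ⊔ φ) y) := by
        linear_combination φ p * hαβ + ((g ⊔ φ) x - φ p) * hαr + ((g ⊔ φ) y - φ p) * hβq
          - κ * φ p * hab
    _ ≤ (1 - κ) * (a * (g ⊔ φ) x + b * (g ⊔ φ) y)
        + κ * (a * (g ⊔ φ) x + b * (g ⊔ φ) y) := by
        gcongr
    _ = a * (g ⊔ φ) x + b * (g ⊔ φ) y := by ring

end Convexity

section RankOneConvex

variable {N n : ℕ}

theorem rank_single_one (i : Fin N) (j : Fin n) : (Matrix.single i j (1 : ℝ)).rank = 1 := by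
  refine le_antisymm ?_ (Nat.one_le_iff_ne_zero.2 fun h => ?_)
  · rw [Matrix.single_eq_single_vecMulVec_single]
    exact Matrix.rank_vecMulVec_le _ _
  · rw [Matrix.rank, Submodule.finrank_eq_zero, LinearMap.range_eq_bot] at h
    simpa using congrFun (LinearMap.congr_fun h (Pi.single j 1)) i

theorem rank_smul_of_ne_zero {c : ℝ} (hc : c ≠ 0) (A : Mat N n) : (c • A).rank = A.rank :=
  Matrix.rank_smul_of_mem_nonZeroDivisors _ (mem_nonZeroDivisors_of_ne_zero hc)

theorem convexOn_line_of_le_of_rank_sub_eq_one {f : Mat N n → ℝ} {S : Set (Mat N n)}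
    (hf : ∀ B ∈ S, ∀ C ∈ S, (B - C).rank = 1 → ∀ a b : ℝ, 0 < a → 0 < b → a + b = 1 →
      a • B + b • C ∈ S → f (a • B + b • C) ≤ a * f B + b * f C)
    {A D : Mat N n} (hD : D.rank = 1) {J : Set ℝ} (hJ : Convex ℝ J) (hJS : ∀ t ∈ J, A + t • D ∈ S) :
    ConvexOn ℝ J fun t => f (A + t • D) := by
  refine convexOn_iff_pairwise_pos.2 ⟨hJ, fun s hs t ht hst a b ha hb hab => ?_⟩
  have hrank : ((A + s • D) - (A + t • D)).rank = 1 := by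
    rw [add_sub_add_left_eq_sub, ← sub_smul, rank_smul_of_ne_zero (sub_ne_zero.2 hst), hD]
  have hline : A + (a • s + b • t) • D = a • (A + s • D) + b • (A + t • D) := by
    obtain rfl : b = 1 - a := eq_sub_of_add_eq' hab
    rw [smul_eq_mul, smul_eq_mul]
    module
  have hmem := hJS _ (hJ hs ht ha.le hb.le hab)
  rw [hline] at hmem ⊢
  exact hf _ (hJS s hs) _ (hJS t ht) hrank a b ha hb hab hmem

theorem rankOneConvexFun_iff_convexOn_line {f : Mat N n → ℝ} :
    RankOneConvexFun f ↔
      ∀ A D : Mat N n, D.rank = 1 → ConvexOn ℝ univ fun t : ℝ => f (A + t • D) := by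
  constructor
  · refine fun hf A D hD => convexOn_line_of_le_of_rank_sub_eq_one (S := univ) ?_ hD convex_univ
      fun _ _ => mem_univ _
    intro B _ C _ hBC a b ha hb hab _
    obtain rfl : b = 1 - a := eq_sub_of_add_eq' hab
    exact hf a ⟨ha.le, sub_nonneg.1 hb.le⟩ B C hBC
  · intro hf a ha A B hAB
    have hconv := (hf B (A - B) hAB).2 (mem_univ 1) (mem_univ 0) ha.1 (sub_nonneg.2 ha.2)
      (add_sub_cancel a 1)
    have hline : a • A + (1 - a) • B = B + a • (A - B) := by module
    simpa [hline] using hconv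

theorem rankOneConvexFun_of_convexOn {f : Mat N n → ℝ} (hf : ConvexOn ℝ univ f) :
    RankOneConvexFun f :=
  fun _ ha A B _ => hf.2 (mem_univ A) (mem_univ B) ha.1 (sub_nonneg.2 ha.2) (add_sub_cancel _ _)

namespace RankOneConvexFun

theorem sup {f g : Mat N n → ℝ} (hf : RankOneConvexFun f) (hg : RankOneConvexFun g) :
    RankOneConvexFun (f ⊔ g) := by
  rw [rankOneConvexFun_iff_convexOn_line] at *
  exact fun A D hD => (hf A D hD).sup (hg A D hD)

theorem const_mul {f : Mat N n → ℝ} (hf : RankOneConvexFun f) {c : ℝ} (hc : 0 ≤ c) :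
    RankOneConvexFun fun A => c * f A := by
  rw [rankOneConvexFun_iff_convexOn_line] at *
  exact fun A D hD => (hf A D hD).smul hc

theorem separatelyConvex {f : Mat N n → ℝ} (hf : RankOneConvexFun f) :
    SeparatelyConvex fun y : Fin N × Fin n → ℝ => f (Matrix.of fun i j => y (i, j)) := by
  intro y p
  convert rankOneConvexFun_iff_convexOn_line.1 hf
    (Matrix.of fun i j => Function.update y p 0 (i, j)) (Matrix.single p.1 p.2 1)
    (rank_single_one p.1 p.2) using 3 with t
  ext i j
  rcases eq_or_ne (i, j) p with rfl | hp
  · simp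
  · have hp' : ¬(p.1 = i ∧ p.2 = j) := fun h => hp (Prod.ext h.1.symm h.2.symm)
    simp [hp, hp']

protected theorem continuous {f : Mat N n → ℝ} (hf : RankOneConvexFun f) : Continuous f := by
  have hentries : Continuous fun (A : Mat N n) (p : Fin N × Fin n) => A p.1 p.2 := by fun_prop
  exact hf.separatelyConvex.continuous.comp hentries

end RankOneConvexFun

theorem subset_RcoF (K : Set (Mat N n)) : K ⊆ RcoF K :=
  fun A hA _ _ hf => hf A hA

theorem RcoF_empty : RcoF (∅ : Set (Mat N n)) = ∅ :=
  eq_empty_of_forall_notMem fun _ hA =>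
    one_pos.not_ge (hA _ (rankOneConvexFun_of_convexOn (convexOn_const 1 convex_univ)) (by simp))

theorem exists_rankOneConvexFun_one_lt_of_notMem_RcoF {K : Set (Mat N n)} {A : Mat N n}
    (hA : A ∉ RcoF K) : ∃ f, RankOneConvexFun f ∧ (∀ B ∈ K, f B ≤ 0) ∧ 1 < f A := by
  simp only [RcoF, mem_ofPred_eq, not_forall, not_le] at hA
  obtain ⟨f, hf, hfK, hfA⟩ := hA
  have hc : 0 ≤ 2 / f A := by positivity
  refine ⟨_, hf.const_mul hc, fun B hB => mul_nonpos_of_nonneg_of_nonpos hc (hfK B hB), ?_⟩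
  rw [div_mul_cancel₀ _ hfA.ne']
  exact one_lt_two

theorem exists_rankOneConvexFun_one_lt_on_isCompact {K C : Set (Mat N n)} (hC : IsCompact C)
    (hKC : Disjoint C (RcoF K)) :
    ∃ φ, RankOneConvexFun φ ∧ (∀ A ∈ K, φ A ≤ 0) ∧ ∀ A ∈ C, 1 < φ A := by
  refine hC.induction_on (p := fun s =>
    ∃ φ, RankOneConvexFun φ ∧ (∀ A ∈ K, φ A ≤ 0) ∧ ∀ A ∈ s, 1 < φ A) ?_ ?_ ?_ ?_
  · exact ⟨_, rankOneConvexFun_of_convexOn (convexOn_const 0 convex_univ), by simp, by simp⟩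
  · rintro s t hst ⟨φ, hφ, hφK, hφt⟩
    exact ⟨φ, hφ, hφK, fun A hA => hφt A (hst hA)⟩
  · rintro s t ⟨φ, hφ, hφK, hφs⟩ ⟨ψ, hψ, hψK, hψt⟩
    refine ⟨_, hφ.sup hψ, fun A hA => sup_le (hφK A hA) (hψK A hA), ?_⟩
    rintro A (hA | hA)
    · exact lt_sup_of_lt_left (hφs A hA)
    · exact lt_sup_of_lt_right (hψt A hA)
  · intro A hA
    obtain ⟨f, hf, hfK, hfA⟩ :=
      exists_rankOneConvexFun_one_lt_of_notMem_RcoF (disjoint_left.1 hKC hA)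
    have hnhds : {B | 1 < f B} ∈ nhds A := (hf.continuous.tendsto A).eventually_const_lt hfA
    exact ⟨_, mem_nhdsWithin_of_mem_nhds hnhds, f, hf, hfK, fun _ hB => hB⟩

theorem exists_rankOneConvexFun_one_lt_off_isOpen {K U : Set (Mat N n)}
    (hK : Bornology.IsBounded K) (hU : IsOpen U) (hKU : RcoF K ⊆ U) :
    ∃ φ, RankOneConvexFun φ ∧ (∀ A ∈ K, φ A ≤ 0) ∧ ∀ A ∉ U, 1 < φ A := by
  obtain ⟨R, hR⟩ := hK.exists_norm_le
  have hC : IsCompact (closedBall (0 : Mat N n) (R + 1) \ U) :=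
    (isCompact_closedBall (0 : Mat N n) (R + 1)).diff hU
  obtain ⟨φ, hφ, hφK, hφC⟩ := exists_rankOneConvexFun_one_lt_on_isCompact hC
    (disjoint_left.2 fun A hA hAK => hA.2 (hKU hAK))
  have hnorm : RankOneConvexFun fun A : Mat N n => ‖A‖ - R :=
    rankOneConvexFun_of_convexOn (convexOn_univ_norm.sub (concaveOn_const R convex_univ))
  refine ⟨_, hφ.sup hnorm, fun A hA => sup_le (hφK A hA) (sub_nonpos.2 (hR A hA)),
    fun A hA => ?_⟩
  by_cases hball : A ∈ closedBall (0 : Mat N n) (R + 1)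
  · exact lt_sup_of_lt_left (hφC A ⟨hball, hA⟩)
  · rw [mem_closedBall_zero_iff, not_le] at hball
    exact lt_sup_of_lt_right (lt_sub_iff_add_lt'.2 hball)

theorem rankOneConvexFun_sup_of_sublevel {φ g : Mat N n → ℝ} {c : ℝ} (hφ : RankOneConvexFun φ)
    (hgc : ∀ A, g A ≤ c)
    (hg : ∀ A D : Mat N n, D.rank = 1 → ConvexOn ℝ {t : ℝ | φ (A + t • D) ≤ c}
      fun t => g (A + t • D)) :
    RankOneConvexFun (g ⊔ φ) :=
  rankOneConvexFun_iff_convexOn_line.2 fun A D hD =>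
    convexOn_sup_of_convexOn_sublevel (rankOneConvexFun_iff_convexOn_line.1 hφ A D hD)
      (fun _ _ => hgc _) (by simpa using hg A D hD)

end RankOneConvex

section WeightedList

variable {X V : Type*} [AddCommMonoid V] [Module ℝ V]

/-- The sum `∑ λ_i F(x_i)` over a list of (weight, point) pairs `(λ_i, x_i)`. It gives the total
weight for `F = 1`, the barycentre for `F = id` and the mass of a set for its indicator. -/
def weightedSum (F : X → V) (L : List (ℝ × X)) : V :=
  (L.map fun p => p.1 • F p.2).sum

/-- The list of (weight, point) pairs with every weight multiplied by `c`. -/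
def scaleWeights (c : ℝ) (L : List (ℝ × X)) : List (ℝ × X) :=
  L.map (Prod.map (c * ·) id)

@[simp]
theorem weightedSum_nil (F : X → V) : weightedSum F ([] : List (ℝ × X)) = 0 :=
  rfl

@[simp]
theorem weightedSum_cons (F : X → V) (p : ℝ × X) (L : List (ℝ × X)) :
    weightedSum F (p :: L) = p.1 • F p.2 + weightedSum F L := by
  simp [weightedSum]

theorem weightedSum_append (F : X → V) (L₁ L₂ : List (ℝ × X)) :
    weightedSum F (L₁ ++ L₂) = weightedSum F L₁ + weightedSum F L₂ := by
  simp [weightedSum]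

theorem weightedSum_perm (F : X → V) {L₁ L₂ : List (ℝ × X)} (h : L₁.Perm L₂) :
    weightedSum F L₁ = weightedSum F L₂ :=
  (h.map _).sum_eq

theorem weightedSum_scaleWeights (F : X → V) (c : ℝ) (L : List (ℝ × X)) :
    weightedSum F (scaleWeights c L) = c • weightedSum F L := by
  simp [weightedSum, scaleWeights, List.smul_sum, Function.comp_def, mul_smul]

theorem weightedSum_nonneg {F : X → ℝ} (hF : 0 ≤ F) {L : List (ℝ × X)} (hL : ∀ p ∈ L, 0 < p.1) :
    0 ≤ weightedSum F L :=
  List.sum_nonneg (List.forall_mem_map.2 fun p hp => mul_nonneg (hL p hp).le (hF p.2))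

theorem sum_fin_smul_eq_weightedSum (F : X → V) (L : List (ℝ × X)) :
    ∑ i : Fin L.length, L[i].1 • F L[i].2 = weightedSum F L :=
  Fin.sum_univ_fun_getElem L fun p => p.1 • F p.2

end WeightedList

section Laminate

variable {N n : ℕ} {U : Set (Mat N n)} {L : List (ℝ × Mat N n)}

theorem rank_sub_comm (A B : Mat N n) : (A - B).rank = (B - A).rank := by
  rw [← rank_smul_of_ne_zero (neg_ne_zero.2 one_ne_zero) (B - A), neg_one_smul, neg_sub]

namespace HIProp

theorem perm (h : HIProp U L) {L' : List (ℝ × Mat N n)} (hperm : L'.Perm L) : HIProp U L' := by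
  cases h with
  | single w A hA => rw [List.perm_singleton.1 hperm]; exact .single w A hA
  | pair w₁ w₂ A₁ A₂ h₁ h₂ hrank =>
    rcases List.perm_pair.1 hperm with rfl | rfl
    · exact .pair w₁ w₂ A₁ A₂ h₁ h₂ hrank
    · exact .pair w₂ w₁ A₂ A₁ h₂ h₁ (rank_sub_comm A₁ A₂ ▸ hrank)
  | step _ R w₁ w₂ A₁ A₂ hL hR h₁ h₂ hrank hrec =>
    exact .step _ R w₁ w₂ A₁ A₂ (hperm.trans hL) hR h₁ h₂ hrank hrec

theorem cons_cons {w₁ w₂ : ℝ} {A₁ A₂ : Mat N n} (h₁ : A₁ ∈ U) (h₂ : A₂ ∈ U)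
    (hrank : (A₁ - A₂).rank = 1)
    (h : HIProp U ((w₁ + w₂, (w₁ + w₂)⁻¹ • (w₁ • A₁ + w₂ • A₂)) :: L)) :
    HIProp U ((w₁, A₁) :: (w₂, A₂) :: L) := by
  rcases eq_or_ne L [] with rfl | hL
  · exact .pair w₁ w₂ A₁ A₂ h₁ h₂ hrank
  · exact .step _ L w₁ w₂ A₁ A₂ (.refl _) hL h₁ h₂ hrank h

theorem scaleWeights (h : HIProp U L) {c : ℝ} (hc : c ≠ 0) : HIProp U (scaleWeights c L) := by
  induction h with
  | single w A hA => exact .single _ A hA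
  | pair w₁ w₂ A₁ A₂ h₁ h₂ hrank => exact .pair _ _ A₁ A₂ h₁ h₂ hrank
  | step L R w₁ w₂ A₁ A₂ hperm hR h₁ h₂ hrank _ ih =>
    refine .step _ (_root_.scaleWeights c R) (c * w₁) (c * w₂) A₁ A₂ (hperm.map _)
      (by simpa [_root_.scaleWeights] using hR) h₁ h₂ hrank ?_
    have hbary : (c * w₁ + c * w₂)⁻¹ • ((c * w₁) • A₁ + (c * w₂) • A₂)
        = (w₁ + w₂)⁻¹ • (w₁ • A₁ + w₂ • A₂) := by
      rw [← mul_add, mul_inv, mul_smul c, mul_smul c, ← smul_add, mul_comm, mul_smul,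
        inv_smul_smul₀ hc]
    rw [← mul_add] at hbary ⊢
    rw [hbary]
    exact ih

theorem append_of_barycenter_cons (h : HIProp U L) (hpos : ∀ p ∈ L, 0 < p.1)
    {R : List (ℝ × Mat N n)}
    (hR : HIProp U ((weightedSum (fun _ => (1 : ℝ)) L,
      (weightedSum (fun _ => (1 : ℝ)) L)⁻¹ • weightedSum id L) :: R)) :
    HIProp U (L ++ R) := by
  induction h with
  | single w A _ =>
    have hw : w ≠ 0 := (hpos _ (List.mem_singleton_self _)).ne'
    simpa [inv_smul_smul₀ hw] using hR
  | pair w₁ w₂ A₁ A₂ h₁ h₂ hrank => exact cons_cons h₁ h₂ hrank (by simpa using hR)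
  | step L rest w₁ w₂ A₁ A₂ hperm _ h₁ h₂ hrank _ ih =>
    have hpos' : ∀ p ∈ (w₁, A₁) :: (w₂, A₂) :: rest, 0 < p.1 :=
      fun p hp => hpos p (hperm.mem_iff.2 hp)
    simp only [List.forall_mem_cons] at hpos'
    obtain ⟨hw₁, hw₂, hpos_rest⟩ := hpos'
    have hw : 0 < w₁ + w₂ := add_pos hw₁ hw₂
    refine (cons_cons h₁ h₂ hrank (ih ?_ ?_)).perm (hperm.append_right R)
    · simpa only [List.forall_mem_cons] using ⟨hw, hpos_rest⟩
    · rw [weightedSum_perm _ hperm, weightedSum_perm _ hperm] at hR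
      simpa [smul_inv_smul₀ hw.ne', add_assoc] using hR

end HIProp

/-- `L` is a finite laminate in `U` with barycentre `A`: a family of (weight, matrix) pairs with
positive weights of sum `1` that satisfies `(H_I(U))`. The barycentre is required to lie in `U`,
which `(H_I(U))` does not guarantee, so that it can be split again inside a larger laminate. -/
structure IsLaminate (U : Set (Mat N n)) (A : Mat N n) (L : List (ℝ × Mat N n)) : Prop where
  barycenter_mem : A ∈ U
  weight_pos : ∀ p ∈ L, 0 < p.1
  hiProp : HIProp U L
  weightedSum_one : weightedSum (fun _ => (1 : ℝ)) L = 1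
  weightedSum_id : weightedSum id L = A

namespace IsLaminate

theorem singleton {A : Mat N n} (hA : A ∈ U) : IsLaminate U A [(1, A)] where
  barycenter_mem := hA
  weight_pos := by simp
  hiProp := .single 1 A hA
  weightedSum_one := by simp
  weightedSum_id := by simp

theorem hiProp_scaleWeights_append {A : Mat N n} (h : IsLaminate U A L) {a : ℝ} (ha : 0 < a)
    {R : List (ℝ × Mat N n)} (hR : HIProp U ((a, A) :: R)) :
    HIProp U (scaleWeights a L ++ R) := by
  refine (h.hiProp.scaleWeights ha.ne').append_of_barycenter_cons ?_ ?_
  · exact List.forall_mem_map.2 fun p hp => mul_pos ha (h.weight_pos p hp)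
  · simpa [weightedSum_scaleWeights, h.weightedSum_one, h.weightedSum_id, inv_smul_smul₀ ha.ne']
      using hR

theorem append {A B : Mat N n} {L₁ L₂ : List (ℝ × Mat N n)} (h₁ : IsLaminate U A L₁)
    (h₂ : IsLaminate U B L₂) (hrank : (A - B).rank = 1) {a b : ℝ} (ha : 0 < a) (hb : 0 < b)
    (hab : a + b = 1) (hmem : a • A + b • B ∈ U) :
    IsLaminate U (a • A + b • B) (scaleWeights a L₁ ++ scaleWeights b L₂) where
  barycenter_mem := hmem
  weight_pos := List.forall_mem_append.2
    ⟨List.forall_mem_map.2 fun p hp => mul_pos ha (h₁.weight_pos p hp),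
      List.forall_mem_map.2 fun p hp => mul_pos hb (h₂.weight_pos p hp)⟩
  hiProp := by
    have hpair : HIProp U [(b, B), (a, A)] :=
      .pair b a B A h₂.barycenter_mem h₁.barycenter_mem (rank_sub_comm A B ▸ hrank)
    exact h₁.hiProp_scaleWeights_append ha
      ((h₂.hiProp_scaleWeights_append hb hpair).perm
        (List.perm_append_singleton _ _).symm)
  weightedSum_one := by
    simp [weightedSum_append, weightedSum_scaleWeights, h₁.weightedSum_one, h₂.weightedSum_one, hab]
  weightedSum_id := by
    simp [weightedSum_append, weightedSum_scaleWeights, h₁.weightedSum_id, h₂.weightedSum_id]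

theorem exists_satisfiesH {A : Mat N n} (h : IsLaminate U A L) {T : Set (Mat N n)} {δ : ℝ}
    (hδ : weightedSum (Tᶜ.indicator 1) L < δ) :
    ∃ (I : ℕ) (l : Fin I → ℝ) (ξs : Fin I → Mat N n),
      (∀ i, 0 < l i) ∧ ∑ i, l i = 1 ∧ SatisfiesH U I l ξs ∧ A = ∑ i, l i • ξs i ∧
      ∑ i ∈ Finset.univ.filter (fun i => ξs i ∉ T), l i < δ := by
  refine ⟨L.length, fun i => L[i].1, fun i => L[i].2, fun i => h.weight_pos _ (L.get_mem i),
    ?_, ?_, ?_, ?_⟩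
  · simpa using (sum_fin_smul_eq_weightedSum (fun _ => (1 : ℝ)) L).trans h.weightedSum_one
  · have hofFn : (List.ofFn fun i : Fin L.length => (L[i].1, L[i].2)) = L := List.ofFn_get L
    rw [SatisfiesH, hofFn]
    exact h.hiProp
  · exact (h.weightedSum_id.symm.trans (sum_fin_smul_eq_weightedSum id L).symm)
  · rw [Finset.sum_filter]
    simpa [← sum_fin_smul_eq_weightedSum, indicator_apply] using hδ

end IsLaminate

/-- The infimum of `∑ λ_i ψ(ξ_i)` over the finite laminates in `U` with barycentre `A`: the rank one
convex envelope of `ψ` relative to `U`. Off `U` there are no such laminates and the value is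
`sInf ∅ = 0`. -/
noncomputable def laminateEnvelope (U : Set (Mat N n)) (ψ : Mat N n → ℝ) (A : Mat N n) : ℝ :=
  sInf (weightedSum ψ '' {L | IsLaminate U A L})

section Envelope

variable {ψ : Mat N n → ℝ} {A : Mat N n}

theorem laminateEnvelope_le_weightedSum (hψ : 0 ≤ ψ) (hL : IsLaminate U A L) :
    laminateEnvelope U ψ A ≤ weightedSum ψ L :=
  csInf_le ⟨0, forall_mem_image.2 fun _ h => weightedSum_nonneg hψ h.weight_pos⟩
    (mem_image_of_mem _ hL)

theorem laminateEnvelope_le_apply (hψ : 0 ≤ ψ) (hA : A ∈ U) : laminateEnvelope U ψ A ≤ ψ A := by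
  simpa using laminateEnvelope_le_weightedSum hψ (.singleton hA)

theorem exists_isLaminate_weightedSum_lt (hA : A ∈ U) {m : ℝ} (hm : laminateEnvelope U ψ A < m) :
    ∃ L, IsLaminate U A L ∧ weightedSum ψ L < m := by
  obtain ⟨_, ⟨L, hL, rfl⟩, hlt⟩ :=
    exists_lt_of_csInf_lt (Set.Nonempty.image _ ⟨_, IsLaminate.singleton hA⟩) hm
  exact ⟨L, hL, hlt⟩

theorem laminateEnvelope_of_notMem (hA : A ∉ U) : laminateEnvelope U ψ A = 0 := by
  have hempty : {L | IsLaminate U A L} = ∅ :=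
    eq_empty_of_forall_notMem fun _ hL => hA hL.barycenter_mem
  rw [laminateEnvelope, hempty, image_empty, Real.sInf_empty]

theorem laminateEnvelope_le_one (hψ : 0 ≤ ψ) (hψ1 : ψ ≤ 1) (A : Mat N n) :
    laminateEnvelope U ψ A ≤ 1 := by
  by_cases hA : A ∈ U
  · exact (laminateEnvelope_le_apply hψ hA).trans (hψ1 A)
  · rw [laminateEnvelope_of_notMem hA]
    exact zero_le_one

theorem laminateEnvelope_le_add (hψ : 0 ≤ ψ) {B : Mat N n} (hA : A ∈ U) (hB : B ∈ U)
    (hrank : (A - B).rank = 1) {a b : ℝ} (ha : 0 < a) (hb : 0 < b) (hab : a + b = 1)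
    (hmem : a • A + b • B ∈ U) :
    laminateEnvelope U ψ (a • A + b • B) ≤
      a * laminateEnvelope U ψ A + b * laminateEnvelope U ψ B := by
  refine le_of_forall_pos_le_add fun ε hε => ?_
  obtain ⟨L₁, h₁, hlt₁⟩ := exists_isLaminate_weightedSum_lt hA (lt_add_of_pos_right _ hε)
  obtain ⟨L₂, h₂, hlt₂⟩ := exists_isLaminate_weightedSum_lt hB (lt_add_of_pos_right _ hε)
  calc laminateEnvelope U ψ (a • A + b • B)
      ≤ weightedSum ψ (scaleWeights a L₁ ++ scaleWeights b L₂) :=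
        laminateEnvelope_le_weightedSum hψ (h₁.append h₂ hrank ha hb hab hmem)
    _ = a * weightedSum ψ L₁ + b * weightedSum ψ L₂ := by
        simp only [weightedSum_append, weightedSum_scaleWeights, smul_eq_mul]
    _ ≤ a * (laminateEnvelope U ψ A + ε) + b * (laminateEnvelope U ψ B + ε) := by gcongr
    _ = a * laminateEnvelope U ψ A + b * laminateEnvelope U ψ B + ε := by
        linear_combination ε * hab

theorem rankOneConvexFun_laminateEnvelope_sup (hψ : 0 ≤ ψ) (hψ1 : ψ ≤ 1) {φ : Mat N n → ℝ}
    (hφ : RankOneConvexFun φ) (hφU : ∀ A ∉ U, 1 < φ A) :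
    RankOneConvexFun (laminateEnvelope U ψ ⊔ φ) := by
  refine rankOneConvexFun_sup_of_sublevel hφ (laminateEnvelope_le_one hψ hψ1) fun A D hD => ?_
  have hJ : Convex ℝ {t : ℝ | φ (A + t • D) ≤ 1} := by
    simpa using (rankOneConvexFun_iff_convexOn_line.1 hφ A D hD).convex_le 1
  refine convexOn_line_of_le_of_rank_sub_eq_one (S := U) ?_ hD hJ fun t ht =>
    by_contra fun hU => (hφU _ hU).not_ge ht
  exact fun B hB C hC hBC a b ha hb hab hmem => laminateEnvelope_le_add hψ hB hC hBC ha hb hab hmem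

theorem laminateEnvelope_nonpos_of_mem_RcoF (hψ : 0 ≤ ψ) (hψ1 : ψ ≤ 1) {K : Set (Mat N n)}
    (hK : Bornology.IsBounded K) (hU : IsOpen U) (hKU : RcoF K ⊆ U) (hψK : ∀ B ∈ K, ψ B ≤ 0)
    (hA : A ∈ RcoF K) : laminateEnvelope U ψ A ≤ 0 := by
  obtain ⟨φ, hφ, hφK, hφU⟩ := exists_rankOneConvexFun_one_lt_off_isOpen hK hU hKU
  refine le_sup_left.trans (hA _ (rankOneConvexFun_laminateEnvelope_sup hψ hψ1 hφ hφU) ?_)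
  exact fun B hB => sup_le
    ((laminateEnvelope_le_apply hψ (hKU (subset_RcoF K hB))).trans (hψK B hB)) (hφK B hB)

end Envelope

theorem exists_isLaminate_mass_compl_lt {K T : Set (Mat N n)} (hK : Bornology.IsBounded K)
    (hU : IsOpen U) (hKU : RcoF K ⊆ U) (hKT : K ⊆ T) {A : Mat N n} (hA : A ∈ RcoF K) {δ : ℝ}
    (hδ : 0 < δ) : ∃ L, IsLaminate U A L ∧ weightedSum (Tᶜ.indicator 1) L < δ := by
  refine exists_isLaminate_weightedSum_lt (hKU hA) (lt_of_le_of_lt ?_ hδ)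
  refine laminateEnvelope_nonpos_of_mem_RcoF (indicator_nonneg fun _ _ => zero_le_one)
    (indicator_le_self' fun _ _ => zero_le_one) hK hU hKU (fun B hB => ?_) hA
  rw [indicator_of_notMem (notMem_compl_iff.2 (hKT hB))]

end Laminate

theorem stmt6_general {N n : ℕ} (E : Set (Mat N n)) (Eδ : ℝ → Set (Mat N n))
    (hEδb : ∀ δ > 0, Bornology.IsBounded (Eδ δ))
    (hsub : ∀ δ > 0, RcoF (Eδ δ) ⊆ interior (RcoF E))
    (h1 : ∀ ε > 0, ∃ δ₀ > 0, ∀ δ ∈ Set.Ioc (0 : ℝ) δ₀, ∀ η ∈ Eδ δ, Metric.infDist η E ≤ ε)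
    (h2 : ∀ η ∈ interior (RcoF E), ∃ δ₀ > 0, ∀ δ ∈ Set.Ioc (0 : ℝ) δ₀, η ∈ RcoF (Eδ δ)) :
    ∀ δ > 0, ∀ ξ ∈ RcoF (Eδ δ), ∃ (I : ℕ) (l : Fin I → ℝ) (ξs : Fin I → Mat N n),
      (∀ i, 0 < l i) ∧ ∑ i, l i = 1 ∧ SatisfiesH (interior (RcoF E)) I l ξs ∧
      ξ = ∑ i, l i • ξs i ∧
      ∑ i ∈ Finset.univ.filter (fun i => ξs i ∉ Metric.thickening δ E), l i < δ := by
  intro δ hδ ξ hξ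
  have hξU : ξ ∈ interior (RcoF E) := hsub δ hδ hξ
  have hE : E.Nonempty := by
    rw [nonempty_iff_ne_empty]
    rintro rfl
    simp [RcoF_empty] at hξU
  obtain ⟨δ₁, hδ₁, hdist⟩ := h1 (δ / 2) (half_pos hδ)
  obtain ⟨δ₂, hδ₂, hmem⟩ := h2 ξ hξU
  have hδ' : 0 < min δ₁ δ₂ := lt_min hδ₁ hδ₂
  have hthick : Eδ (min δ₁ δ₂) ⊆ thickening δ E := fun η hη =>
    (mem_thickening_iff_infDist_lt hE).2
      ((hdist _ ⟨hδ', min_le_left _ _⟩ η hη).trans_lt (half_lt_self hδ))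
  obtain ⟨L, hL, hmass⟩ := exists_isLaminate_mass_compl_lt (hEδb _ hδ') isOpen_interior
    (hsub _ hδ') hthick (hmem _ ⟨hδ', min_le_right _ _⟩) hδ
  exact hL.exists_satisfiesH hmass

theorem stmt6 {N n : ℕ} (E : Set (Mat N n)) (hE : Bornology.IsBounded E)
    (Eδ : ℝ → Set (Mat N n)) (hEδc : ∀ δ > 0, IsCompact (Eδ δ))
    (hsub : ∀ δ > 0, RcoF (Eδ δ) ⊆ interior (RcoF E))
    (h1 : ∀ ε > 0, ∃ δ₀ > 0, ∀ δ ∈ Set.Ioc (0:ℝ) δ₀, ∀ η ∈ Eδ δ, Metric.infDist η E ≤ ε)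
    (h2 : ∀ η ∈ interior (RcoF E), ∃ δ₀ > 0, ∀ δ ∈ Set.Ioc (0:ℝ) δ₀, η ∈ RcoF (Eδ δ)) :
    ∀ δ > 0, ∀ ξ ∈ RcoF (Eδ δ), ∃ (I : ℕ) (l : Fin I → ℝ) (ξs : Fin I → Mat N n),
      (∀ i, 0 < l i) ∧ ∑ i, l i = 1 ∧ SatisfiesH (interior (RcoF E)) I l ξs ∧
      ξ = ∑ i, l i • ξs i ∧
      ∑ i ∈ Finset.univ.filter (fun i => ξs i ∉ Metric.thickening δ E), l i < δ := by
  exact stmt6_general E Eδ (fun δ hδ => (hEδc δ hδ).isBounded) hsub h1 h2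

end Statements
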